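/- Fix N∈ℕ. Let r_n,r:[0,T]→V be strongly measurable with sup_n sup_{t∈[0,T]}‖i(r_n(t))‖_H < ∞ and sup_{t∈[0,T]}‖i(r(t))‖_H < ∞, and suppose that for some q>0, ∫_0^T ‖i(r_n(t))−i(r(t))‖_H^q dt → 0 as n→∞. Let g_n,g∈S^N be such that ∫_{𝕏_T} φ·g_n dν_T → ∫_{𝕏_T} φ·g dν_T for every continuous compactly supported φ:𝕏_T→ℝ, and assume the maps (s,z)↦f(s,r_n(s),z)·(g_n(s,z)−1) and (s,z)↦f(s,r(s),z)·(g(s,z)−1) are Bochner ν_T-integrable. Then for every t∈[0,T] and every h∈H: ⟨∫_0^t ∫_𝕏 f(s,r_n(s),z)·(g_n(s,z)−1) ν(dz) ds, h⟩_H → ⟨∫_0^t ∫_𝕏 f(s,r(s),z)·(g(s,z)−1) ν(dz) ds, h⟩_H as n→∞. -/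

import Mathlib

open MeasureTheory Real Filter
open scoped ENNReal RealInnerProductSpace

/-- The second-order remainder of the exponential, convex conjugate of `x ↦ l (1 + x)`, where
`l r = r log r - r + 1`. -/
noncomputable def expRem (y : ℝ) : ℝ := Real.exp y - 1 - y

lemma expRem_nonneg (y : ℝ) : 0 ≤ expRem y := by
  unfold expRem; linarith [Real.add_one_le_exp y]

lemma expRem_zero : expRem 0 = 0 := by simp [expRem]

@[fun_prop]
lemma continuous_expRem : Continuous expRem := by unfold expRem; fun_prop

lemma expRem_le_sq_mul_exp {y : ℝ} (hy : 0 ≤ y) : expRem y ≤ y ^ 2 * Real.exp y := by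
  have h1 : Real.exp y - 1 ≤ y * Real.exp y := by
    have := Real.add_one_le_exp (-y)
    have h2 : Real.exp (-y) * Real.exp y = 1 := by rw [← Real.exp_add]; simp
    nlinarith [Real.exp_pos y]
  unfold expRem
  nlinarith

lemma sq_le_two_mul_expRem {y : ℝ} (hy : 0 ≤ y) : y ^ 2 ≤ 2 * expRem y := by
  unfold expRem
  linarith [Real.quadratic_le_exp_of_nonneg hy]

lemma expRem_mono {x y : ℝ} (hx : 0 ≤ x) (hxy : x ≤ y) : expRem x ≤ expRem y := by
  unfold expRem
  have h1 := Real.add_one_le_exp (y - x)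
  have h2 : Real.exp y = Real.exp x * Real.exp (y - x) := by rw [← Real.exp_add]; ring_nf
  nlinarith [Real.one_le_exp hx]

lemma expRem_le_expRem_abs (y : ℝ) : expRem y ≤ expRem |y| := by
  rcases le_total 0 y with h | h
  · rw [abs_of_nonneg h]
  · rw [abs_of_nonpos h]
    have := Real.self_le_sinh_iff.2 (neg_nonneg.2 h)
    rw [Real.sinh_eq, neg_neg] at this
    unfold expRem
    linarith

lemma mul_sub_one_le_entropy_add_expRem (y : ℝ) {b : ℝ} (hb : 0 ≤ b) :
    y * (b - 1) ≤ (b * Real.log b - b + 1) + expRem y := by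
  unfold expRem
  rcases hb.eq_or_lt with rfl | hb
  · simp; linarith [Real.exp_pos y]
  · have h1 := Real.add_one_le_exp (y - Real.log b)
    have h2 : Real.exp y = b * Real.exp (y - Real.log b) := by
      rw [Real.exp_sub, Real.exp_log hb]; field_simp
    nlinarith

lemma abs_mul_sub_one_le_entropy_add_expRem (y : ℝ) {b : ℝ} (hb : 0 ≤ b) :
    |y * (b - 1)| ≤ (b * Real.log b - b + 1) + expRem |y| := by
  rw [abs_le']
  constructor
  · linarith [mul_sub_one_le_entropy_add_expRem y hb, expRem_le_expRem_abs y]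
  · have := expRem_le_expRem_abs (-y)
    rw [abs_neg] at this
    linarith [mul_sub_one_le_entropy_add_expRem (-y) hb]

lemma entropy_nonneg {b : ℝ} (hb : 0 ≤ b) : 0 ≤ b * Real.log b - b + 1 := by
  simpa [expRem_zero] using mul_sub_one_le_entropy_add_expRem 0 hb

section Pairing

variable {Y : Type*} [MeasurableSpace Y] {μ : Measure Y}

/-- All positive multiples of `φ` have integrable exponential remainder. -/
def MemExpHeart (φ : Y → ℝ) (μ : Measure Y) : Prop :=
  ∀ σ : ℝ, 0 < σ → ∫⁻ q, ENNReal.ofReal (expRem (σ * |φ q|)) ∂μ < ⊤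

/-- Nonnegative measurable functions of relative entropy at most `N`. -/
structure EntropyLE (g : Y → ℝ) (μ : Measure Y) (N : ℝ≥0∞) : Prop where
  measurable : Measurable g
  nonneg : ∀ q, 0 ≤ g q
  lintegral_le : ∫⁻ q, ENNReal.ofReal (g q * Real.log (g q) - g q + 1) ∂μ ≤ N

lemma EntropyLE.lintegral_mul_sub_one_le {g φ : Y → ℝ} {N : ℝ≥0∞} (hg : EntropyLE g μ N)
    {σ : ℝ} (hσ : 0 < σ) :
    ∫⁻ q, ‖φ q * (g q - 1)‖ₑ ∂μ ≤
      ENNReal.ofReal σ⁻¹ * (N + ∫⁻ q, ENNReal.ofReal (expRem (σ * |φ q|)) ∂μ) := by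
  have hm := hg.measurable
  calc ∫⁻ q, ‖φ q * (g q - 1)‖ₑ ∂μ
      ≤ ∫⁻ q, ENNReal.ofReal σ⁻¹ * (ENNReal.ofReal (g q * Real.log (g q) - g q + 1) +
          ENNReal.ofReal (expRem (σ * |φ q|))) ∂μ := by
        refine lintegral_mono fun q => ?_
        rw [← ENNReal.ofReal_add (entropy_nonneg (hg.nonneg q)) (expRem_nonneg _),
          ← ENNReal.ofReal_mul (by positivity), ← ofReal_norm]
        refine ENNReal.ofReal_le_ofReal ?_
        have := abs_mul_sub_one_le_entropy_add_expRem (σ * φ q) (hg.nonneg q)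
        rw [abs_mul σ, abs_of_pos hσ, mul_assoc, abs_mul, abs_of_pos hσ] at this
        rw [Real.norm_eq_abs, ← div_eq_inv_mul, le_div_iff₀ hσ]
        linarith
    _ = ENNReal.ofReal σ⁻¹ * (∫⁻ q, ENNReal.ofReal (g q * Real.log (g q) - g q + 1) ∂μ +
          ∫⁻ q, ENNReal.ofReal (expRem (σ * |φ q|)) ∂μ) := by
        rw [lintegral_const_mul' _ _ ENNReal.ofReal_ne_top, lintegral_add_left (by fun_prop)]
    _ ≤ _ := by gcongr; exact hg.lintegral_le

lemma EntropyLE.integrable_mul_sub_one {g φ : Y → ℝ} {N : ℝ≥0∞} (hg : EntropyLE g μ N)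
    (hN : N ≠ ⊤) (hφm : Measurable φ) (hφ : MemExpHeart φ μ) :
    Integrable (fun q => φ q * (g q - 1)) μ := by
  have hm := hg.measurable
  refine ⟨by fun_prop, (hg.lintegral_mul_sub_one_le one_pos).trans_lt ?_⟩
  exact ENNReal.mul_lt_top ENNReal.ofReal_lt_top (ENNReal.add_lt_top.2 ⟨hN.lt_top, hφ 1 one_pos⟩)

lemma MemExpHeart.mono {φ G : Y → ℝ} (hG : MemExpHeart G μ) (h : ∀ᵐ q ∂μ, |φ q| ≤ |G q|) :
    MemExpHeart φ μ := fun σ hσ => by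
  refine (lintegral_mono_ae ?_).trans_lt (hG σ hσ)
  filter_upwards [h] with q hq
  exact ENNReal.ofReal_le_ofReal (expRem_mono (by positivity) (by gcongr))

lemma MemExpHeart.const_mul {φ : Y → ℝ} (hφ : MemExpHeart φ μ) (c : ℝ) :
    MemExpHeart (fun q => c * φ q) μ := fun σ hσ => by
  refine (lintegral_mono fun q => ENNReal.ofReal_le_ofReal ?_).trans_lt
    (hφ (σ * (|c| + 1)) (by positivity))
  refine expRem_mono (by positivity) ?_
  rw [abs_mul, mul_assoc]
  gcongr
  linarith

lemma lintegral_expRem_le_of_bounded {φ : Y → ℝ} {K : ℝ} (hK : ∀ q, |φ q| ≤ K) {σ : ℝ}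
    (hσ : 0 < σ) :
    ∫⁻ q, ENNReal.ofReal (expRem (σ * |φ q|)) ∂μ ≤
      ENNReal.ofReal (σ ^ 2 * Real.exp (σ * K)) * ∫⁻ q, ENNReal.ofReal (φ q ^ 2) ∂μ := by
  rw [← lintegral_const_mul' _ _ ENNReal.ofReal_ne_top]
  refine lintegral_mono fun q => ?_
  rw [← ENNReal.ofReal_mul (by positivity)]
  refine ENNReal.ofReal_le_ofReal ((expRem_le_sq_mul_exp (by positivity)).trans ?_)
  have h1 : Real.exp (σ * |φ q|) ≤ Real.exp (σ * K) := by gcongr; exact hK q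
  rw [mul_pow, sq_abs]
  have : 0 ≤ σ ^ 2 * φ q ^ 2 := by positivity
  nlinarith

lemma memExpHeart_of_bounded {φ : Y → ℝ} {K : ℝ} (hK : ∀ q, |φ q| ≤ K)
    (h2 : ∫⁻ q, ENNReal.ofReal (φ q ^ 2) ∂μ < ⊤) : MemExpHeart φ μ := fun _ hσ =>
  (lintegral_expRem_le_of_bounded hK hσ).trans_lt (ENNReal.mul_lt_top ENNReal.ofReal_lt_top h2)

lemma MemExpHeart.lintegral_sq_lt_top {φ : Y → ℝ} (hφ : MemExpHeart φ μ) :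
    ∫⁻ q, ENNReal.ofReal (φ q ^ 2) ∂μ < ⊤ := by
  have : ∀ q, ENNReal.ofReal (φ q ^ 2) ≤
      ENNReal.ofReal 2 * ENNReal.ofReal (expRem (1 * |φ q|)) := fun q => by
    rw [← ENNReal.ofReal_mul (by positivity), one_mul, ← sq_abs]
    exact ENNReal.ofReal_le_ofReal (sq_le_two_mul_expRem (abs_nonneg _))
  refine (lintegral_mono this).trans_lt ?_
  rw [lintegral_const_mul' _ _ ENNReal.ofReal_ne_top]
  exact ENNReal.mul_lt_top ENNReal.ofReal_lt_top (hφ 1 one_pos)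

/-- A square-integrable function whose square is exponentially integrable on sets of finite
measure lies in the exponential heart. -/
lemma memExpHeart_of_sq_of_exp_sq {G : Y → ℝ} (hGm : Measurable G)
    (h2 : ∫⁻ q, ENNReal.ofReal (G q ^ (2 : ℕ)) ∂μ < ⊤)
    (hexp : ∃ δ : ℝ, 0 < δ ∧ ∀ Γ : Set Y, MeasurableSet Γ → μ Γ < ⊤ →
      ∫⁻ q in Γ, ENNReal.ofReal (Real.exp (δ * G q ^ (2 : ℝ))) ∂μ < ⊤) :
    MemExpHeart G μ := by
  obtain ⟨δ, hδ, hΓ⟩ := hexp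
  set A : Set Y := {q | 1 ≤ |G q|}
  have hA : MeasurableSet A := measurableSet_le measurable_const (by fun_prop)
  have hAfin : μ A < ⊤ := by
    have h := meas_ge_le_lintegral_div (μ := μ) (f := fun q => ENNReal.ofReal (G q ^ 2))
      (by fun_prop) one_ne_zero ENNReal.one_ne_top
    rw [div_one] at h
    refine (measure_mono fun q (hq : 1 ≤ |G q|) => ?_).trans_lt (h.trans_lt h2)
    simpa using hq
  intro σ hσ
  rw [← lintegral_add_compl _ hA]
  refine ENNReal.add_lt_top.2 ⟨?_, ?_⟩
  · have : ∀ q, ENNReal.ofReal (expRem (σ * |G q|)) ≤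
        ENNReal.ofReal (Real.exp (σ ^ 2 / δ)) *
          ENNReal.ofReal (Real.exp (δ * G q ^ (2 : ℝ))) := fun q => by
      rw [← ENNReal.ofReal_mul (by positivity), ← Real.exp_add]
      refine ENNReal.ofReal_le_ofReal ?_
      have h1 : σ * |G q| ≤ σ ^ 2 / δ + δ * G q ^ (2 : ℝ) := by
        rw [Real.rpow_two, ← sq_abs (G q), div_add' _ _ _ hδ.ne', le_div_iff₀ hδ]
        nlinarith [sq_nonneg (σ - δ * |G q|), abs_nonneg (G q), mul_pos hσ hδ]
      have h2 := Real.exp_le_exp.2 h1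
      have : 0 ≤ σ * |G q| := by positivity
      unfold expRem
      linarith
    refine (lintegral_mono this).trans_lt ?_
    rw [lintegral_const_mul' _ _ ENNReal.ofReal_ne_top]
    exact ENNReal.mul_lt_top ENNReal.ofReal_lt_top (hΓ A hA hAfin)
  · rw [← lintegral_indicator hA.compl]
    have hb := memExpHeart_of_bounded (μ := μ) (φ := Aᶜ.indicator G) (K := 1) (fun q => ?_) ?_
      σ hσ
    · convert hb using 3 with q
      by_cases hq : q ∈ Aᶜ <;> simp [hq, expRem_zero]
    · by_cases hq : q ∈ Aᶜ
      · have h : |G q| < 1 := not_le.1 hq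
        simpa [hq] using h.le
      · simp [hq]
    · refine (lintegral_mono fun q => ?_).trans_lt h2
      by_cases hq : q ∈ Aᶜ <;> simp [hq]

lemma MemExpHeart.tendsto_lintegral_expRem {φ : ℕ → Y → ℝ} {G : Y → ℝ} (hG : MemExpHeart G μ)
    (hφm : ∀ n, Measurable (φ n)) (hle : ∀ n, ∀ᵐ q ∂μ, |φ n q| ≤ |G q|)
    (hlim : ∀ᵐ q ∂μ, Tendsto (fun n => φ n q) atTop (nhds 0)) {σ : ℝ} (hσ : 0 < σ) :
    Tendsto (fun n => ∫⁻ q, ENNReal.ofReal (expRem (σ * |φ n q|)) ∂μ) atTop (nhds 0) := by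
  have := tendsto_lintegral_of_dominated_convergence (μ := μ)
    (F := fun n q => ENNReal.ofReal (expRem (σ * |φ n q|))) (f := fun _ => 0)
    (fun q => ENNReal.ofReal (expRem (σ * |G q|))) (fun n => by have := hφm n; fun_prop)
    (fun n => ?_) (hG σ hσ).ne ?_
  · simpa using this
  · filter_upwards [hle n] with q hq
    exact ENNReal.ofReal_le_ofReal (expRem_mono (by positivity) (by gcongr))
  · filter_upwards [hlim] with q hq
    have hc : Continuous fun y : ℝ => ENNReal.ofReal (expRem (σ * |y|)) :=
      ENNReal.continuous_ofReal.comp (by fun_prop)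
    simpa [expRem_zero, Function.comp_def] using (hc.tendsto 0).comp hq

/-- Uniform entropy bounds turn dominated convergence in the exponential heart into convergence
of the pairings. -/
lemma MemExpHeart.tendsto_lintegral_mul_sub_one {φ : ℕ → Y → ℝ} {G : Y → ℝ}
    (hG : MemExpHeart G μ) (hφm : ∀ n, Measurable (φ n))
    (hle : ∀ n, ∀ᵐ q ∂μ, |φ n q| ≤ |G q|)
    (hlim : ∀ᵐ q ∂μ, Tendsto (fun n => φ n q) atTop (nhds 0))
    {g : ℕ → Y → ℝ} {N : ℝ≥0∞} (hN : N ≠ ⊤) (hg : ∀ n, EntropyLE (g n) μ N) :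
    Tendsto (fun n => ∫⁻ q, ‖φ n q * (g n q - 1)‖ₑ ∂μ) atTop (nhds 0) := by
  rw [ENNReal.tendsto_nhds_zero]
  intro ε hε
  obtain ⟨σ, hσ, hσε⟩ : ∃ σ : ℝ, 0 < σ ∧ ENNReal.ofReal σ⁻¹ * (N + 1) ≤ ε := by
    have h1 : Tendsto (fun σ : ℝ => ENNReal.ofReal σ⁻¹ * (N + 1)) atTop (nhds 0) := by
      simpa using ENNReal.Tendsto.mul_const
        (ENNReal.tendsto_ofReal tendsto_inv_atTop_zero) (Or.inr (by simp [hN]))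
    exact ((eventually_gt_atTop 0).and (ENNReal.tendsto_nhds_zero.1 h1 ε hε)).exists
  filter_upwards [ENNReal.tendsto_nhds_zero.1
    (hG.tendsto_lintegral_expRem hφm hle hlim hσ) 1 one_pos] with n hn
  refine ((hg n).lintegral_mul_sub_one_le hσ).trans (le_trans ?_ hσε)
  gcongr

/-- The functions whose pairings converge form a closed class in the exponential heart. -/
lemma tendsto_integral_mul_sub_one_of_approx {ψ : Y → ℝ} (hψm : Measurable ψ)
    (hψ : MemExpHeart ψ μ) {g : ℕ → Y → ℝ} {g' : Y → ℝ} {N : ℝ≥0∞} (hN : N ≠ ⊤)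
    (hg : ∀ n, EntropyLE (g n) μ N) (hg' : EntropyLE g' μ N)
    (happ : ∀ σ : ℝ, 0 < σ → ∃ φ : Y → ℝ, Measurable φ ∧ MemExpHeart φ μ ∧
      ∫⁻ q, ENNReal.ofReal (expRem (σ * |ψ q - φ q|)) ∂μ ≤ 1 ∧
      Tendsto (fun n => ∫ q, φ q * (g n q - 1) ∂μ) atTop (nhds (∫ q, φ q * (g' q - 1) ∂μ))) :
    Tendsto (fun n => ∫ q, ψ q * (g n q - 1) ∂μ) atTop (nhds (∫ q, ψ q * (g' q - 1) ∂μ)) := by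
  rw [Metric.tendsto_atTop]
  intro ε hε
  have hM : (0 : ℝ) ≤ N.toReal := ENNReal.toReal_nonneg
  set σ : ℝ := 3 * (N.toReal + 1) / ε with hσdef
  have hσ : 0 < σ := by positivity
  obtain ⟨φ, hφm, hφ, hle, hlim⟩ := happ σ hσ
  have key : ∀ k : Y → ℝ, EntropyLE k μ N →
      |∫ q, ψ q * (k q - 1) ∂μ - ∫ q, φ q * (k q - 1) ∂μ| ≤ ε / 3 := fun k hk => by
    rw [← integral_sub (hk.integrable_mul_sub_one hN hψm hψ)
      (hk.integrable_mul_sub_one hN hφm hφ)]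
    have h1 : ∫⁻ q, ‖(ψ q - φ q) * (k q - 1)‖ₑ ∂μ ≤ ENNReal.ofReal (ε / 3) := by
      refine (hk.lintegral_mul_sub_one_le hσ).trans ?_
      calc _ ≤ ENNReal.ofReal σ⁻¹ * (N + 1) := by gcongr
        _ = ENNReal.ofReal σ⁻¹ * ENNReal.ofReal (N.toReal + 1) := by
          rw [ENNReal.ofReal_add hM zero_le_one, ENNReal.ofReal_toReal hN, ENNReal.ofReal_one]
        _ = ENNReal.ofReal (ε / 3) := by
          rw [← ENNReal.ofReal_mul (by positivity), hσdef]
          congr 1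
          field_simp
    have h2 : ‖∫ q, (ψ q - φ q) * (k q - 1) ∂μ‖ₑ ≤ ENNReal.ofReal (ε / 3) :=
      (enorm_integral_le_lintegral_enorm _).trans h1
    rw [← ofReal_norm, ENNReal.ofReal_le_ofReal_iff (by positivity)] at h2
    simpa only [sub_mul, Real.norm_eq_abs] using h2
  obtain ⟨n₀, hn₀⟩ := Metric.tendsto_atTop.1 hlim (ε / 3) (by positivity)
  refine ⟨n₀, fun n hn => ?_⟩
  have h1 := key _ (hg n)
  have h2 := key _ hg'
  have h3 := hn₀ n hn
  rw [Real.dist_eq] at h3 ⊢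
  rw [abs_le] at h1 h2
  rw [abs_lt] at h3 ⊢
  constructor <;> linarith [h1.1, h1.2, h2.1, h2.2, h3.1, h3.2]


lemma exists_seq_tendsto_ae_zero_of_integral_rpow [IsFiniteMeasure μ] {ρ : ℕ → Y → ℝ}
    (hρm : ∀ n, Measurable (ρ n)) (hρ0 : ∀ n q, 0 ≤ ρ n q) {R : ℝ}
    (hρR : ∀ n, ∀ᵐ q ∂μ, ρ n q ≤ R) {p : ℝ} (hp : 0 < p)
    (hlim : Tendsto (fun n => ∫ q, ρ n q ^ p ∂μ) atTop (nhds 0)) :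
    ∃ ns : ℕ → ℕ, ∀ᵐ q ∂μ, Tendsto (fun n => ρ (ns n) q) atTop (nhds 0) := by
  have hm : ∀ n, Measurable fun q => ρ n q ^ p := fun n => (hρm n).pow_const p
  have hint : ∀ n, Integrable (fun q => ρ n q ^ p) μ := fun n => by
    refine Integrable.of_bound (hm n).aestronglyMeasurable (R ^ p) ?_
    filter_upwards [hρR n] with q hq
    rw [Real.norm_of_nonneg (Real.rpow_nonneg (hρ0 n q) p)]
    exact Real.rpow_le_rpow (hρ0 n q) hq hp.le
  have hmeas : TendstoInMeasure μ (fun n q => ρ n q ^ p) atTop (fun _ => (0 : ℝ)) := by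
    refine tendstoInMeasure_of_tendsto_eLpNorm one_ne_zero
      (fun n => (hm n).aestronglyMeasurable) aestronglyMeasurable_const ?_
    have h1 : ∀ n, eLpNorm ((fun q => ρ n q ^ p) - fun _ => (0 : ℝ)) 1 μ =
        ENNReal.ofReal (∫ q, ρ n q ^ p ∂μ) := fun n => by
      rw [eLpNorm_one_eq_lintegral_enorm, ofReal_integral_eq_lintegral_ofReal (hint n)
        (Eventually.of_forall fun q => Real.rpow_nonneg (hρ0 n q) p)]
      refine lintegral_congr fun q => ?_
      simp only [Pi.sub_apply, sub_zero]
      exact Real.enorm_of_nonneg (Real.rpow_nonneg (hρ0 n q) p)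
    simp_rw [h1]
    simpa using ENNReal.tendsto_ofReal hlim
  obtain ⟨ns, -, hns⟩ := hmeas.exists_seq_tendsto_ae
  refine ⟨ns, ?_⟩
  filter_upwards [hns] with q hq
  have h := hq.rpow_const (p := p⁻¹) (Or.inr (by positivity))
  rw [Real.zero_rpow (by positivity)] at h
  refine h.congr fun n => ?_
  exact Real.rpow_rpow_inv (hρ0 _ _) hp.ne'

section Topological

variable [TopologicalSpace Y] [BorelSpace Y]

lemma memExpHeart_of_hasCompactSupport [IsFiniteMeasureOnCompacts μ] {φ : Y → ℝ}
    (hc : Continuous φ) (hs : HasCompactSupport φ) : MemExpHeart φ μ := by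
  obtain ⟨K, hK⟩ := hs.exists_bound_of_continuous hc
  refine memExpHeart_of_bounded hK ?_
  have hs2 : HasCompactSupport fun q => φ q ^ 2 :=
    hs.comp_left (g := fun x : ℝ => x ^ 2) (zero_pow two_ne_zero)
  have hc2 : Continuous fun q => φ q ^ 2 := by fun_prop
  have h : Integrable (fun q => φ q ^ 2) μ := hc2.integrable_of_hasCompactSupport hs2
  exact h.lintegral_lt_top

lemma tendsto_integral_mul_sub_one_of_hasCompactSupport [IsFiniteMeasureOnCompacts μ]
    {φ : Y → ℝ} (hc : Continuous φ) (hs : HasCompactSupport φ)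
    {g : ℕ → Y → ℝ} {g' : Y → ℝ} {N : ℝ≥0∞} (hN : N ≠ ⊤)
    (hg : ∀ n, EntropyLE (g n) μ N) (hg' : EntropyLE g' μ N)
    (hlim : Tendsto (fun n => ∫ q, φ q * g n q ∂μ) atTop (nhds (∫ q, φ q * g' q ∂μ))) :
    Tendsto (fun n => ∫ q, φ q * (g n q - 1) ∂μ) atTop (nhds (∫ q, φ q * (g' q - 1) ∂μ)) := by
  have hφ : Integrable φ μ := hc.integrable_of_hasCompactSupport hs
  have key : ∀ k : Y → ℝ, EntropyLE k μ N →
      ∫ q, φ q * (k q - 1) ∂μ = ∫ q, φ q * k q ∂μ - ∫ q, φ q ∂μ := fun k hk => by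
    have h := (hk.integrable_mul_sub_one hN hc.measurable
      (memExpHeart_of_hasCompactSupport hc hs)).add hφ
    rw [← integral_sub (h.congr (Eventually.of_forall fun q => ?_)) hφ]
    · simp only [mul_sub, mul_one]
    · simp only [Pi.add_apply]; ring
  simp_rw [fun n => key _ (hg n), key _ hg']
  exact hlim.sub_const _

variable [NormalSpace Y] [R1Space Y] [WeaklyLocallyCompactSpace Y] [μ.Regular]

lemma exists_hasCompactSupport_lintegral_expRem_le_one {ψ : Y → ℝ} (hψm : Measurable ψ)
    (hψ : MemExpHeart ψ μ) {K : ℝ} (hK0 : 0 ≤ K) (hK : ∀ q, |ψ q| ≤ K) {σ : ℝ} (hσ : 0 < σ) :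
    ∃ φ : Y → ℝ, Continuous φ ∧ HasCompactSupport φ ∧
      ∫⁻ q, ENNReal.ofReal (expRem (σ * |ψ q - φ q|)) ∂μ ≤ 1 := by
  have hsq : ∀ k : Y → ℝ, ∫⁻ q, ENNReal.ofReal (k q ^ 2) ∂μ = eLpNorm k 2 μ ^ 2 := fun k => by
    rw [eLpNorm_eq_lintegral_rpow_enorm_toReal two_ne_zero ENNReal.ofNat_ne_top,
      ← ENNReal.rpow_two, ← ENNReal.rpow_mul]
    simp only [ENNReal.toReal_ofNat, one_div, ENNReal.rpow_two]
    norm_num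
    refine lintegral_congr fun q => ?_
    rw [← ofReal_norm, ← ENNReal.ofReal_pow (norm_nonneg _), Real.norm_eq_abs, sq_abs]
  have hψ2 : MemLp ψ 2 μ := by
    refine ⟨hψm.aestronglyMeasurable, ?_⟩
    have := hψ.lintegral_sq_lt_top
    rw [hsq] at this
    by_contra h
    rw [not_lt_top_iff] at h
    simp [h] at this
  set c : ℝ := σ ^ 2 * Real.exp (σ * (2 * K))
  have hc0 : 0 ≤ c := by positivity
  obtain ⟨φ, hs, hle, hc, -⟩ := hψ2.exists_hasCompactSupport_eLpNorm_sub_le ENNReal.ofNat_ne_top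
    (ε := ENNReal.ofReal (c + 1)⁻¹) (by simp; positivity)
  have hclip : ∀ a y : ℝ, |a| ≤ K → |a - max (-K) (min K y)| ≤ |a - y| ∧
      |max (-K) (min K y)| ≤ K := fun a y ha => by
    rw [abs_le] at ha
    constructor
    · rcases le_total K y with h | h
      · rw [min_eq_left h, max_eq_right (by linarith), abs_of_nonpos (by linarith),
          abs_of_nonpos (by linarith)]
        linarith
      · rw [min_eq_right h]
        rcases le_total (-K) y with h' | h'
        · rw [max_eq_right h']
        · rw [max_eq_left h', abs_of_nonneg (by linarith), abs_of_nonneg (by linarith)]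
          linarith
    · rw [abs_le]
      exact ⟨le_max_left _ _, max_le (by linarith) (min_le_left _ _)⟩
  refine ⟨fun q => max (-K) (min K (φ q)), by fun_prop,
    hs.comp_left (g := fun y => max (-K) (min K y)) (by simp [hK0]), ?_⟩
  refine (lintegral_expRem_le_of_bounded (K := 2 * K) (fun q => ?_) hσ).trans ?_
  · have h1 := hK q
    have h2 := (hclip _ (φ q) (hK q)).2
    exact (abs_sub _ _).trans (by linarith)
  · calc ENNReal.ofReal c * ∫⁻ q, ENNReal.ofReal ((ψ q - max (-K) (min K (φ q))) ^ 2) ∂μ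
        ≤ ENNReal.ofReal c * ∫⁻ q, ENNReal.ofReal ((ψ - φ) q ^ 2) ∂μ := by
          refine mul_le_mul_right (lintegral_mono fun q => ENNReal.ofReal_le_ofReal ?_) _
          exact sq_le_sq.2 (hclip _ (φ q) (hK q)).1
      _ ≤ ENNReal.ofReal c * ENNReal.ofReal (c + 1)⁻¹ ^ 2 := by
          rw [hsq]; gcongr
      _ = ENNReal.ofReal (c * (c + 1)⁻¹ ^ 2) := by
          rw [← ENNReal.ofReal_pow (by positivity), ← ENNReal.ofReal_mul hc0]
      _ ≤ 1 := by
          rw [ENNReal.ofReal_le_one, inv_pow, ← div_eq_mul_inv, div_le_one (by positivity)]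
          nlinarith

/-- Under a uniform entropy bound, vague convergence extends from compactly supported continuous
test functions to the whole exponential heart. -/
lemma MemExpHeart.tendsto_integral_mul_sub_one {ψ : Y → ℝ} (hψm : Measurable ψ)
    (hψ : MemExpHeart ψ μ) {g : ℕ → Y → ℝ} {g' : Y → ℝ} {N : ℝ≥0∞} (hN : N ≠ ⊤)
    (hg : ∀ n, EntropyLE (g n) μ N) (hg' : EntropyLE g' μ N)
    (hlim : ∀ φ : Y → ℝ, Continuous φ → HasCompactSupport φ →
      Tendsto (fun n => ∫ q, φ q * g n q ∂μ) atTop (nhds (∫ q, φ q * g' q ∂μ))) :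
    Tendsto (fun n => ∫ q, ψ q * (g n q - 1) ∂μ) atTop (nhds (∫ q, ψ q * (g' q - 1) ∂μ)) := by
  have hbdd : ∀ χ : Y → ℝ, Measurable χ → MemExpHeart χ μ → ∀ K : ℝ, 0 ≤ K →
      (∀ q, |χ q| ≤ K) → Tendsto (fun n => ∫ q, χ q * (g n q - 1) ∂μ) atTop
        (nhds (∫ q, χ q * (g' q - 1) ∂μ)) := fun χ hχm hχ K hK0 hK => by
    refine tendsto_integral_mul_sub_one_of_approx hχm hχ hN hg hg' fun σ hσ => ?_
    obtain ⟨φ, hc, hs, hle⟩ :=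
      exists_hasCompactSupport_lintegral_expRem_le_one hχm hχ hK0 hK hσ
    exact ⟨φ, hc.measurable, memExpHeart_of_hasCompactSupport hc hs, hle,
      tendsto_integral_mul_sub_one_of_hasCompactSupport hc hs hN hg hg' (hlim φ hc hs)⟩
  refine tendsto_integral_mul_sub_one_of_approx hψm hψ hN hg hg' fun σ hσ => ?_
  set A : ℕ → Set Y := fun k => {q | |ψ q| ≤ k}
  have hA : ∀ k, MeasurableSet (A k) := fun k => measurableSet_le (by fun_prop) (by fun_prop)
  have htrunc := hψ.tendsto_lintegral_expRem (φ := fun k q => ψ q - (A k).indicator ψ q)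
    (fun k => hψm.sub (hψm.indicator (hA k)))
    (fun k => Eventually.of_forall fun q => by by_cases hq : q ∈ A k <;> simp [hq])
    (Eventually.of_forall fun q => by
      obtain ⟨k₀, hk₀⟩ := exists_nat_ge |ψ q|
      refine tendsto_const_nhds.congr' ?_
      filter_upwards [eventually_ge_atTop k₀] with k hk
      have : q ∈ A k := hk₀.trans (by exact_mod_cast hk)
      simp [this]) hσ
  obtain ⟨k, hk⟩ := (ENNReal.tendsto_nhds_zero.1 htrunc 1 one_pos).exists
  have hheart : MemExpHeart ((A k).indicator ψ) μ :=
    hψ.mono (Eventually.of_forall fun q => by by_cases hq : q ∈ A k <;> simp [hq])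
  refine ⟨(A k).indicator ψ, hψm.indicator (hA k), hheart, hk,
    hbdd _ (hψm.indicator (hA k)) hheart k k.cast_nonneg fun q => ?_⟩
  by_cases hq : q ∈ A k
  · simpa [hq] using (show |ψ q| ≤ k from hq)
  · simp [hq]

end Topological

end Pairing

lemma inner_setIntegral_integral_smul {𝕏 : Type*} [MeasurableSpace 𝕏]
    {H : Type*} [NormedAddCommGroup H] [InnerProductSpace ℝ H] [CompleteSpace H]
    {ν : Measure 𝕏} [SFinite ν] {t T : ℝ} (ht : t ≤ T) {k : ℝ × 𝕏 → ℝ} {u : ℝ × 𝕏 → H}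
    (hint : Integrable (fun q => k q • u q) ((volume.restrict (Set.Icc 0 T)).prod ν)) (h : H) :
    ⟪∫ s in Set.Icc (0 : ℝ) t, ∫ z, k (s, z) • u (s, z) ∂ν, h⟫ =
      ∫ q, (Set.Icc (0 : ℝ) t ×ˢ Set.univ).indicator (fun q => ⟪u q, h⟫) q * k q
        ∂((volume.restrict (Set.Icc 0 T)).prod ν) := by
  have hμ : (volume.restrict (Set.Icc (0 : ℝ) t)).prod ν =
      ((volume.restrict (Set.Icc 0 T)).prod ν).restrict (Set.Icc (0 : ℝ) t ×ˢ Set.univ) := by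
    rw [← Measure.prod_restrict, Measure.restrict_univ, Measure.restrict_restrict measurableSet_Icc,
      Set.inter_eq_self_of_subset_left (Set.Icc_subset_Icc_right ht)]
  have hint' : Integrable (fun q => k q • u q) ((volume.restrict (Set.Icc (0 : ℝ) t)).prod ν) := by
    rw [hμ]; exact hint.restrict
  rw [← integral_prod (fun q => k q • u q) hint', real_inner_comm, ← integral_inner hint', hμ,
    ← integral_indicator (measurableSet_Icc.prod MeasurableSet.univ)]
  refine integral_congr_ae (Eventually.of_forall fun q => ?_)
  by_cases hq : q ∈ Set.Icc (0 : ℝ) t ×ˢ (Set.univ : Set 𝕏)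
  · simp only [Set.indicator_of_mem hq, real_inner_smul_right, real_inner_comm h]
    ring
  · simp only [Set.indicator_of_notMem hq, zero_mul]

theorem stmt_13
    {𝕏 : Type*} [TopologicalSpace 𝕏] [PolishSpace 𝕏] [LocallyCompactSpace 𝕏]
    [MeasurableSpace 𝕏] [BorelSpace 𝕏]
    {H : Type*} [NormedAddCommGroup H] [InnerProductSpace ℝ H]
    [TopologicalSpace.SeparableSpace H] [MeasurableSpace H] [BorelSpace H]
    {V : Type*} [NormedAddCommGroup V] [NormedSpace ℝ V]
    [TopologicalSpace.SeparableSpace V] [MeasurableSpace V] [BorelSpace V]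
    (T : ℝ) (hT : 0 < T)
    (ν : Measure 𝕏) [SigmaFinite ν] (hνK : ∀ Kc : Set 𝕏, IsCompact Kc → ν Kc < ⊤)
    (νT : Measure (ℝ × 𝕏)) (hνT : νT = (volume.restrict (Set.Icc 0 T)).prod ν)
    (i : V →L[ℝ] H) (hiInj : Function.Injective i) (hiDense : DenseRange i)
    (f : ℝ → V → 𝕏 → H)
    (hfm : Measurable fun q : ℝ × V × 𝕏 => f q.1 q.2.1 q.2.2)
    (Lf : ℝ × 𝕏 → ℝ) (hLfm : Measurable Lf) (hLfnn : ∀ q, 0 ≤ Lf q)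
    (hLfint : ∫⁻ q, ENNReal.ofReal (Lf q ^ (2 : ℕ)) ∂νT < ⊤)
    (hLfH : ∃ δ : ℝ, 0 < δ ∧ ∀ Γ : Set (ℝ × 𝕏), MeasurableSet Γ → νT Γ < ⊤ →
      ∫⁻ q in Γ, ENNReal.ofReal (Real.exp (δ * Lf q ^ (2 : ℝ))) ∂νT < ⊤)
    (hfb : ∀ (t : ℝ) (v : V) (z : 𝕏), ‖f t v z‖ ≤ Lf (t, z) * (1 + ‖i v‖))
    (Gf : ℝ × 𝕏 → ℝ) (hGfm : Measurable Gf) (hGfnn : ∀ q, 0 ≤ Gf q)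
    (hGfint : ∫⁻ q, ENNReal.ofReal (Gf q ^ (2 : ℕ)) ∂νT < ⊤)
    (hGfH : ∃ δ : ℝ, 0 < δ ∧ ∀ Γ : Set (ℝ × 𝕏), MeasurableSet Γ → νT Γ < ⊤ →
      ∫⁻ q in Γ, ENNReal.ofReal (Real.exp (δ * Gf q ^ (2 : ℝ))) ∂νT < ⊤)
    (hfLip : ∀ (t : ℝ) (v₁ v₂ : V) (z : 𝕏),
      ‖f t v₁ z - f t v₂ z‖ ≤ Gf (t, z) * ‖i v₁ - i v₂‖)
    (N : ℕ)
    (SN : Set (ℝ × 𝕏 → ℝ))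
    (hSN : SN = {g : ℝ × 𝕏 → ℝ | Measurable g ∧ (∀ q, 0 ≤ g q) ∧
      ∫⁻ q, ENNReal.ofReal (g q * Real.log (g q) - g q + 1) ∂νT ≤ (N : ℝ≥0∞)})
    (rn : ℕ → ℝ → V) (r : ℝ → V)
    (hrnm : ∀ n, StronglyMeasurable (rn n)) (hrm : StronglyMeasurable r)
    (hrnbdd : ∃ M : ℝ, ∀ n, ∀ t ∈ Set.Icc (0 : ℝ) T, ‖i (rn n t)‖ ≤ M)
    (hrbdd : ∃ M : ℝ, ∀ t ∈ Set.Icc (0 : ℝ) T, ‖i (r t)‖ ≤ M)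
    (q : ℝ) (hq : 0 < q)
    (hrconv : Tendsto (fun n => ∫ t in Set.Icc (0 : ℝ) T, ‖i (rn n t) - i (r t)‖ ^ q)
      atTop (nhds 0))
    (gn : ℕ → ℝ × 𝕏 → ℝ) (g : ℝ × 𝕏 → ℝ)
    (hgn : ∀ n, gn n ∈ SN) (hg : g ∈ SN)
    (hgconv : ∀ φ : ℝ × 𝕏 → ℝ, Continuous φ → HasCompactSupport φ →
      Tendsto (fun n => ∫ q', φ q' * gn n q' ∂νT) atTop (nhds (∫ q', φ q' * g q' ∂νT)))
    (hintn : ∀ n, Integrable (fun qz : ℝ × 𝕏 => (gn n qz - 1) • f qz.1 (rn n qz.1) qz.2) νT)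
    (hint : Integrable (fun qz : ℝ × 𝕏 => (g qz - 1) • f qz.1 (r qz.1) qz.2) νT) :
    ∀ t ∈ Set.Icc (0 : ℝ) T, ∀ h : H,
      Tendsto (fun n =>
          ⟪∫ s in Set.Icc (0 : ℝ) t, ∫ z, (gn n (s, z) - 1) • f s (rn n s) z ∂ν, h⟫)
        atTop
        (nhds ⟪∫ s in Set.Icc (0 : ℝ) t, ∫ z, (g (s, z) - 1) • f s (r s) z ∂ν, h⟫) := by
  intro t ht h
  by_cases hH : CompleteSpace H
  swap
  · have hz : ∀ F : ℝ → H, ∫ s in Set.Icc (0 : ℝ) t, F s = 0 := fun F => by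
      simp [integral, hH]
    simp only [hz]
    exact tendsto_const_nhds
  have : IsFiniteMeasureOnCompacts ν := ⟨fun K hK => hνK K hK⟩
  let := TopologicalSpace.upgradeIsCompletelyMetrizable 𝕏
  subst hνT hSN
  have hN : (N : ℝ≥0∞) ≠ ⊤ := ENNReal.natCast_ne_top N
  have hgn' : ∀ n, EntropyLE (gn n) ((volume.restrict (Set.Icc 0 T)).prod ν) N :=
    fun n => ⟨(hgn n).1, (hgn n).2.1, (hgn n).2.2⟩
  have hg' : EntropyLE g ((volume.restrict (Set.Icc 0 T)).prod ν) N := ⟨hg.1, hg.2.1, hg.2.2⟩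
  have hL := memExpHeart_of_sq_of_exp_sq hLfm hLfint hLfH
  have hG := memExpHeart_of_sq_of_exp_sq hGfm hGfint hGfH
  set μ := (volume.restrict (Set.Icc 0 T)).prod ν
  have hmem : ∀ᵐ p : ℝ × 𝕏 ∂μ, p.1 ∈ Set.Icc 0 T :=
    Measure.quasiMeasurePreserving_fst.ae (ae_restrict_mem measurableSet_Icc)
  set A : Set (ℝ × 𝕏) := Set.Icc (0 : ℝ) t ×ˢ Set.univ
  have hA : MeasurableSet A := measurableSet_Icc.prod MeasurableSet.univ
  let ψ : (ℝ → V) → ℝ × 𝕏 → ℝ := fun v => A.indicator fun p => ⟪f p.1 (v p.1) p.2, h⟫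
  have hψm : ∀ v : ℝ → V, StronglyMeasurable v → Measurable (ψ v) := fun v hv => by
    refine Measurable.indicator ?_ hA
    have h1 : Measurable fun p : ℝ × 𝕏 => f p.1 (v p.1) p.2 :=
      hfm.comp (measurable_fst.prodMk ((hv.measurable.comp measurable_fst).prodMk measurable_snd))
    exact (show Continuous fun x : H => ⟪x, h⟫ by fun_prop).measurable.comp h1
  have hψ : ∀ v : ℝ → V, (∃ M : ℝ, ∀ s ∈ Set.Icc (0 : ℝ) T, ‖i (v s)‖ ≤ M) →
      MemExpHeart (ψ v) μ := by
    rintro v ⟨M, hM⟩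
    refine (hL.const_mul ((1 + M) * ‖h‖)).mono ?_
    filter_upwards [hmem] with p hp
    by_cases hpA : p ∈ A
    · simp only [ψ, Set.indicator_of_mem hpA]
      refine (abs_real_inner_le_norm _ _).trans (le_trans ?_ (le_abs_self _))
      calc ‖f p.1 (v p.1) p.2‖ * ‖h‖ ≤ (Lf p * (1 + M)) * ‖h‖ := by
            gcongr
            refine (hfb _ _ _).trans ?_
            gcongr
            · exact hLfnn p
            · exact hM _ hp
        _ = (1 + M) * ‖h‖ * Lf p := by ring
    · simp only [ψ, Set.indicator_of_notMem hpA, abs_zero]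
      positivity
  obtain ⟨M, hM⟩ := hrnbdd
  obtain ⟨M', hM'⟩ := hrbdd
  simp only [fun n => inner_setIntegral_integral_smul (u := fun p => f p.1 (rn n p.1) p.2)
    (k := fun p => gn n p - 1) ht.2 (hintn n) h, inner_setIntegral_integral_smul
    (u := fun p => f p.1 (r p.1) p.2) (k := fun p => g p - 1) ht.2 hint h]
  change Tendsto (fun n => ∫ p, ψ (rn n) p * (gn n p - 1) ∂μ) atTop
    (nhds (∫ p, ψ r p * (g p - 1) ∂μ))
  have hlim := (hψ r ⟨M', hM'⟩).tendsto_integral_mul_sub_one (hψm r hrm) hN hgn' hg' hgconv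
  let ρ : ℕ → ℝ → ℝ := fun n s => ‖i (rn n s) - i (r s)‖
  have hρm : ∀ n, Measurable (ρ n) := fun n =>
    ((i.continuous.comp_stronglyMeasurable (hrnm n)).sub
      (i.continuous.comp_stronglyMeasurable hrm)).norm.measurable
  have hρR : ∀ n, ∀ s ∈ Set.Icc 0 T, ρ n s ≤ M + M' := fun n s hs =>
    (norm_sub_le _ _).trans (add_le_add (hM n s hs) (hM' s hs))
  have hψsub : ∀ n p, |ψ (rn n) p - ψ r p| ≤ ρ n p.1 * (‖h‖ * Gf p) := fun n p => by
    by_cases hpA : p ∈ A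
    · simp only [ψ, Set.indicator_of_mem hpA, ← inner_sub_left]
      refine (abs_real_inner_le_norm _ _).trans ?_
      calc _ ≤ (Gf p * ρ n p.1) * ‖h‖ := by gcongr; exact hfLip _ _ _ _
        _ = _ := by ring
    · have := hGfnn p
      simp only [ψ, Set.indicator_of_notMem hpA, sub_self, abs_zero]
      positivity
  have herr : Tendsto (fun n => ∫⁻ p, ‖(ψ (rn n) p - ψ r p) * (gn n p - 1)‖ₑ ∂μ)
      atTop (nhds 0) := by
    refine tendsto_of_subseq_tendsto fun ns hns => ?_
    obtain ⟨ms, hms⟩ := exists_seq_tendsto_ae_zero_of_integral_rpow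
      (μ := volume.restrict (Set.Icc 0 T)) (ρ := fun n => ρ (ns n)) (fun n => hρm _)
      (fun n s => norm_nonneg _) (R := M + M')
      (fun n => (ae_restrict_mem measurableSet_Icc).mono (hρR _)) hq (hrconv.comp hns)
    refine ⟨ms, (hG.const_mul ((M + M') * ‖h‖)).tendsto_lintegral_mul_sub_one
      (φ := fun n p => ψ (rn (ns (ms n))) p - ψ r p)
      (fun n => (hψm _ (hrnm _)).sub (hψm r hrm)) (fun n => ?_) ?_ hN (fun n => hgn' _)⟩
    · filter_upwards [hmem] with p hp
      refine (hψsub _ p).trans (le_trans ?_ (le_abs_self _))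
      have := hGfnn p
      rw [mul_assoc]
      gcongr
      exact hρR _ _ hp
    · have hms' : ∀ᵐ p : ℝ × 𝕏 ∂μ,
          Tendsto (fun n => ρ (ns (ms n)) p.1) atTop (nhds 0) :=
        Measure.quasiMeasurePreserving_fst.ae hms
      filter_upwards [hms'] with p hp
      refine squeeze_zero_norm (fun n => hψsub _ p) ?_
      simpa using hp.mul_const (‖h‖ * Gf p)
  have hdiff : Tendsto (fun n => ∫ p, (ψ (rn n) p - ψ r p) * (gn n p - 1) ∂μ)
      atTop (nhds 0) := by
    rw [tendsto_zero_iff_enorm_tendsto_zero]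
    exact tendsto_of_tendsto_of_tendsto_of_le_of_le tendsto_const_nhds herr
      (fun _ => zero_le) fun n => enorm_integral_le_lintegral_enorm _
  have hsum := hdiff.add hlim
  rw [zero_add] at hsum
  refine hsum.congr fun n => ?_
  have h1 := (hgn' n).integrable_mul_sub_one hN (hψm _ (hrnm n)) (hψ _ ⟨M, hM n⟩)
  have h2 := (hgn' n).integrable_mul_sub_one hN (hψm r hrm) (hψ r ⟨M', hM'⟩)
  simp only [sub_mul]
  rw [integral_sub h1 h2, sub_add_cancel]
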